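/- Let G be the CPDAG of the Markov equivalence class of a DAG, and let X, Y be distinct nodes such that X is a possible ancestor of Y in G. Then G is amenable relative to (X, Y) if and only if for every V ∈ Sib_G(X), the set Pa_G(V) ∪ {X} d-separates V and Y in every DAG of the Markov equivalence class represented by G. -/

import Mathlib

/-- A directed acyclic graph on node set `V`: a directed edge relation with no
directed cycles (no edge `a → b` together with a directed path from `b` back to `a`). -/
structure Dag (V : Type*) where
  edge : V → V → Prop
  acyclic : ∀ a b : V, edge a b → ¬ Relation.ReflTransGen edge b a

variable {V : Type*}

namespace Dag

/-- `a` is an ancestor of `b` (equivalently, `b` is a descendant of `a`):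
there is a directed path from `a` to `b`; every node is its own ancestor. -/
def Anc (D : Dag V) (a b : V) : Prop := Relation.ReflTransGen D.edge a b

/-- `a` and `b` are adjacent (joined by an edge in either direction). -/
def Adj (D : Dag V) (a b : V) : Prop := D.edge a b ∨ D.edge b a

/-- The parents of `x` in the DAG `D`. -/
def Pa (D : Dag V) (x : V) : Set V := {a | D.edge a x}

/-- The Markov blanket of `x`: parents, children, and parents of children of `x`
(excluding `x` itself). -/
def MB (D : Dag V) (x : V) : Set V :=
  {v | v ≠ x ∧ (D.edge v x ∨ D.edge x v ∨ ∃ c : V, D.edge x c ∧ D.edge v c)}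

end Dag

/-- A path between `x` and `y` with respect to an adjacency relation `A`:
a sequence of distinct nodes, starting at `x` and ending at `y`, in which
consecutive nodes are adjacent. `n` is the number of edges of the path. -/
structure GPath (A : V → V → Prop) (x y : V) where
  n : ℕ
  f : Fin (n + 1) → V
  inj : Function.Injective f
  first : f ⟨0, by omega⟩ = x
  last : f ⟨n, by omega⟩ = y
  adj : ∀ i : Fin n, A (f i.castSucc) (f i.succ)

namespace GPath

/-- The non-endpoint node at position `i` of the path `p` is a collider with respect
to the directed edge relation `E`: both incident edges of the path point into it. -/
def ColliderAt {A : V → V → Prop} {x y : V} (p : GPath A x y)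
    (E : V → V → Prop) (i : ℕ) : Prop :=
  ∃ (_ : 0 < i) (_ : i < p.n),
    E (p.f ⟨i - 1, by omega⟩) (p.f ⟨i, by omega⟩) ∧
    E (p.f ⟨i + 1, by omega⟩) (p.f ⟨i, by omega⟩)

/-- The path `p` is blocked by the node set `S` in the DAG `D`: it contains a
non-collider that lies in `S`, or a collider such that neither the collider nor any
of its descendants lies in `S`. -/
def Blocked {A : V → V → Prop} {x y : V} (p : GPath A x y)
    (D : Dag V) (S : Set V) : Prop :=
  ∃ (i : ℕ) (_ : 0 < i) (_ : i < p.n),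
    (¬ p.ColliderAt D.edge i ∧ p.f ⟨i, by omega⟩ ∈ S) ∨
    (p.ColliderAt D.edge i ∧ ∀ d : V, D.Anc (p.f ⟨i, by omega⟩) d → d ∉ S)

end GPath

namespace Dag

/-- `x` and `y` are d-separated by `S` in the DAG `D`: every path between `x` and `y`
is blocked by `S`. -/
def dSep (D : Dag V) (x y : V) (S : Set V) : Prop :=
  ∀ p : GPath D.Adj x y, p.Blocked D S

/-- Two DAGs on the same node set are Markov equivalent if they have exactly the same
d-separation relations. -/
def MEquiv (D D' : Dag V) : Prop :=
  ∀ (x y : V) (S : Set V), D.dSep x y S ↔ D'.dSep x y S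

/-- The edge between `a` and `b` is directed `a → b` in the CPDAG of the Markov
equivalence class of `D`: the edge `a → b` holds in every DAG Markov equivalent to `D`. -/
def CpDir (D : Dag V) (a b : V) : Prop :=
  ∀ D' : Dag V, D.MEquiv D' → D'.edge a b

/-- The edge between `a` and `b` is undirected (`a − b`) in the CPDAG: `a` and `b` are
adjacent (the CPDAG has the same adjacencies as the DAGs of the MEC) but the edge is not
directed either way in the CPDAG. -/
def CpUndir (D : Dag V) (a b : V) : Prop :=
  D.Adj a b ∧ ¬ D.CpDir a b ∧ ¬ D.CpDir b a

/-- `Pa_G(a)`: the nodes with a directed edge into `a` in the CPDAG. -/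
def CpPa (D : Dag V) (a : V) : Set V := {p | D.CpDir p a}

/-- `Ch_G(a)`: the nodes `b` with the edge directed `a → b` in the CPDAG. -/
def CpCh (D : Dag V) (a : V) : Set V := {c | D.CpDir a c}

/-- `Sib_G(a)`: the nodes joined to `a` by an undirected edge in the CPDAG. -/
def CpSib (D : Dag V) (a : V) : Set V := {s | D.CpUndir a s}

end Dag

namespace GPath

/-- `p` is a possibly directed path in the CPDAG: no edge on it is directed
backwards (as `V_i ← V_{i+1}`) in the CPDAG. -/
def CpPossiblyDirected {D : Dag V} {x y : V} (p : GPath D.Adj x y) : Prop :=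
  ∀ i : Fin p.n, ¬ D.CpDir (p.f i.succ) (p.f i.castSucc)

/-- `p` is a (fully) directed path in the CPDAG: every edge on it is directed
forwards in the CPDAG. -/
def CpDirected {D : Dag V} {x y : V} (p : GPath D.Adj x y) : Prop :=
  ∀ i : Fin p.n, D.CpDir (p.f i.castSucc) (p.f i.succ)

/-- `p` is a directed path from `x` to `y` in the DAG `D` itself. -/
def DirectedIn {D : Dag V} {x y : V} (p : GPath D.Adj x y) : Prop :=
  ∀ i : Fin p.n, D.edge (p.f i.castSucc) (p.f i.succ)

/-- `p` is unshielded: for every three consecutive nodes on it, the first and the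
third are non-adjacent. -/
def Unshielded {D : Dag V} {x y : V} (p : GPath D.Adj x y) : Prop :=
  ∀ (i : ℕ) (_ : i + 2 ≤ p.n), ¬ D.Adj (p.f ⟨i, by omega⟩) (p.f ⟨i + 2, by omega⟩)

end GPath

namespace Dag

/-- `x` is a possible ancestor of `y` in the CPDAG: there is a possibly directed path
from `x` to `y`. -/
def PossAn (D : Dag V) (x y : V) : Prop :=
  ∃ p : GPath D.Adj x y, p.CpPossiblyDirected

/-- `x` is an explicit ancestor of `y` in the CPDAG: there is a fully directed path
from `x` to `y` in the CPDAG. -/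
def ExplAn (D : Dag V) (x y : V) : Prop :=
  ∃ p : GPath D.Adj x y, p.CpDirected

/-- The CPDAG is amenable relative to `(x, y)`: every possibly directed path from
`x` to `y` starts with a directed edge out of `x`. -/
def Amenable (D : Dag V) (x y : V) : Prop :=
  ∀ p : GPath D.Adj x y, p.CpPossiblyDirected →
    ∀ _ : 0 < p.n, D.CpDir (p.f ⟨0, by omega⟩) (p.f ⟨1, by omega⟩)

/-- `S` is a valid adjustment set for `(x, y)` in the DAG `D`:
(i) no element of `S` is a descendant of any node `w ≠ x` lying on a directed path
from `x` to `y`, and (ii) every path between `x` and `y` that is not a directed path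
from `x` to `y` is blocked by `S`. -/
def ValidAdjustment (D : Dag V) (x y : V) (S : Set V) : Prop :=
  (∀ s ∈ S, ∀ w : V, w ≠ x → D.Anc x w → D.Anc w y → ¬ D.Anc w s) ∧
  (∀ p : GPath D.Adj x y, ¬ p.DirectedIn → p.Blocked D S)

/-- `Cn_D(x, y)`: the nodes `w ≠ x` lying on some directed path from `x` to `y` in `D`. -/
def Cn (D : Dag V) (x y : V) : Set V := {w | w ≠ x ∧ D.Anc x w ∧ D.Anc w y}

end Dag

/-!
The CPDAG is described by Meek's rules: an edge is directed iff it is derived from the immoralities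
by the first three rules. Derived edges propagate along undirected ones (`a → b − c` forces
`a → c`), so every member of the class, restricted to the undirected edges, exhibits these as a
chordal graph, and every perfect ordering of the chordal graph conversely orients them into a
member of the class. As any edge of a chordal graph can start a perfect ordering, for `X − v` there
are members `E` and `F` of the class in which `X` and `v` come first, in this order in `E` and in
the opposite order in `F`.

In `E` the parents of `v` are exactly `Pa(v) ∪ {X}`. If the CPDAG is amenable, `Y` is not a
descendant of `v` in `E`, as `X → v → ⋯ → Y` would be possibly directed, nor is it a parent of `v`,
so the local Markov property gives the separation. If it is not amenable, a possibly directed path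
`X − v ⋯ Y` can be turned into a directed path of `F` from `v` to `Y` avoiding `X`; it avoids
`Pa(v)` by acyclicity and stays open given `Pa(v) ∪ {X}`.

That Meek's rules describe the CPDAG rests on the theorem of Verma and Pearl. Two DAGs with the
same pattern are joined by reversals of covered edges, and such a reversal keeps all d-separations
because it does not change where a Bayes ball can roll.
-/

open Relation

namespace Dag

variable {D : Dag V} {S : Set V} {a b u w : V}

theorem Adj.symm (h : D.Adj a b) : D.Adj b a := Or.symm h

theorem edge_asymm (h : D.edge a b) : ¬ D.edge b a := fun h' => D.acyclic a b h (.single h')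

theorem edge_irrefl (D : Dag V) (a : V) : ¬ D.edge a a := fun h => edge_asymm h h

theorem not_transGen_self (D : Dag V) (a : V) : ¬ TransGen D.edge a a := fun h =>
  let ⟨b, hab, hba⟩ := TransGen.head'_iff.1 h
  D.acyclic a b hab hba

theorem Anc.antisymm (hab : D.Anc a b) (hba : D.Anc b a) : a = b := by
  rcases reflTransGen_iff_eq_or_transGen.1 hab with h | h
  · exact h.symm
  · exact (D.not_transGen_self a (h.trans_left hba)).elim

/-- The ancestors of the members of `S`. -/
def ancestors (D : Dag V) (S : Set V) : Set V := {u | ∃ s ∈ S, D.Anc u s}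

theorem subset_ancestors (D : Dag V) (S : Set V) : S ⊆ D.ancestors S := fun s hs => ⟨s, hs, .refl⟩

theorem Anc.mem_ancestors (h : D.Anc u w) : w ∈ D.ancestors S → u ∈ D.ancestors S :=
  fun ⟨s, hs, hw⟩ => ⟨s, hs, h.trans hw⟩

/-- The consecutive nodes `u, v, w` of a walk do not block it at `v`. -/
def OpenTriple (D : Dag V) (S : Set V) (u v w : V) : Prop :=
  (¬ (D.edge u v ∧ D.edge w v) → v ∉ S) ∧ (D.edge u v ∧ D.edge w v → v ∈ D.ancestors S)

/-- The nodes `g 0, …, g n` form a walk, possibly with repetitions, that is nowhere blocked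
by `S`. The values of `g` beyond `n` are irrelevant. -/
structure IsActiveWalk (D : Dag V) (S : Set V) (n : ℕ) (g : ℕ → V) : Prop where
  adj : ∀ i < n, D.Adj (g i) (g (i + 1))
  openTriple : ∀ i, i + 1 < n → D.OpenTriple S (g i) (g (i + 1)) (g (i + 2))

/-- The sequence that follows `f` up to position `m` and `h` from there on. -/
def splice (m : ℕ) (f h : ℕ → V) (t : ℕ) : V := if t < m then f t else h (t - m)

theorem splice_add (m : ℕ) (f h : ℕ → V) (t : ℕ) : splice m f h (m + t) = h t := by
  simp [splice]

theorem splice_of_le {m : ℕ} {f h : ℕ → V} (hfh : f m = h 0) {t : ℕ} (ht : t ≤ m) :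
    splice m f h t = f t := by
  rcases ht.lt_or_eq with ht | rfl
  · simp [splice, ht]
  · simp [splice, hfh]

namespace IsActiveWalk

variable {m n k : ℕ} {f g h : ℕ → V}

theorem take (hg : D.IsActiveWalk S n g) (hmn : m ≤ n) : D.IsActiveWalk S m g :=
  ⟨fun i hi => hg.adj i (by omega), fun i hi => hg.openTriple i (by omega)⟩

theorem drop (hg : D.IsActiveWalk S n g) (m : ℕ) :
    D.IsActiveWalk S (n - m) (fun t => g (m + t)) :=
  ⟨fun i hi => hg.adj (m + i) (by omega), fun i hi => hg.openTriple (m + i) (by omega)⟩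

theorem splice (hf : D.IsActiveWalk S m f) (hh : D.IsActiveWalk S k h) (hfh : f m = h 0)
    (hjoin : ∀ i, i + 1 = m → 0 < k → D.OpenTriple S (f i) (f m) (h 1)) :
    D.IsActiveWalk S (m + k) (splice m f h) where
  adj i hi := by
    rcases lt_or_ge i m with him | hmi
    · rw [splice_of_le hfh him.le, splice_of_le hfh him]
      exact hf.adj i him
    · obtain ⟨t, rfl⟩ := Nat.exists_eq_add_of_le hmi
      rw [add_assoc, splice_add, splice_add]
      exact hh.adj t (by omega)
  openTriple i hi := by
    rcases lt_trichotomy (i + 1) m with him | him | hmi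
    · rw [splice_of_le hfh (by omega), splice_of_le hfh him.le, splice_of_le hfh him]
      exact hf.openTriple i him
    · rw [splice_of_le hfh (by omega), splice_of_le hfh him.le, him,
        show i + 2 = m + 1 by omega, splice_add]
      exact hjoin i him (by omega)
    · obtain ⟨t, rfl⟩ := Nat.exists_eq_add_of_le (Nat.le_of_lt_succ hmi)
      rw [add_assoc, add_assoc, splice_add, splice_add, splice_add]
      exact hh.openTriple t (by omega)

theorem mem_ancestors_or_transGen (hg : D.IsActiveWalk S n g) (h0 : D.edge (g 0) (g 1))
    (hn : 0 < n) : g 0 ∈ D.ancestors S ∨ TransGen D.edge (g 0) (g n) := by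
  suffices ∀ k, k + 1 ≤ n → g 0 ∈ D.ancestors S ∨
      TransGen D.edge (g 0) (g (k + 1)) ∧ D.edge (g k) (g (k + 1)) by
    obtain ⟨k, rfl⟩ := Nat.exists_eq_add_one.2 hn
    exact (this k le_rfl).imp_right And.left
  intro k
  induction k with
  | zero => exact fun _ => .inr ⟨.single h0, h0⟩
  | succ k ih =>
    intro hk
    rcases ih (by omega) with hS | ⟨htrans, hlast⟩
    · exact .inl hS
    rcases hg.adj (k + 1) hk with hfwd | hback
    · exact .inr ⟨htrans.tail hfwd, hfwd⟩
    · exact .inl (Anc.mem_ancestors htrans.to_reflTransGen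
        ((hg.openTriple k (by omega)).2 ⟨hlast, hback⟩))

theorem openTriple_of_loop (hg : D.IsActiveWalk S n g) {i j : ℕ} (hij : i + 1 < j) (hjn : j < n)
    (hloop : g (i + 1) = g j) : D.OpenTriple S (g i) (g (i + 1)) (g (j + 1)) := by
  have hopen_i := hg.openTriple i (by omega)
  have hopen_j : D.OpenTriple S (g (j - 1)) (g j) (g (j + 1)) := by
    obtain ⟨j, rfl⟩ := Nat.exists_eq_add_one.2 (Nat.zero_lt_of_lt hij)
    exact hg.openTriple j hjn
  rw [← hloop] at hopen_j
  refine ⟨fun hcoll => ?_, fun hcoll => ?_⟩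
  · by_cases hin : D.edge (g i) (g (i + 1))
    · exact hopen_j.1 fun h => hcoll ⟨hin, h.2⟩
    · exact hopen_i.1 fun h => hin h.1
  · rcases hg.adj (i + 1) (by omega) with hout | hin
    · have hwalk := (hg.take hjn.le).drop (i + 1)
      refine (hwalk.mem_ancestors_or_transGen hout (by omega)).resolve_right fun hcycle => ?_
      rw [Nat.add_sub_cancel' hij.le] at hcycle
      exact D.not_transGen_self _ (hloop ▸ hcycle)
    · exact hopen_i.2 ⟨hcoll.1, hin⟩

theorem removeLoop (hg : D.IsActiveWalk S n g) {i j : ℕ} (hij : i < j) (hjn : j ≤ n)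
    (hloop : g i = g j) :
    D.IsActiveWalk S (i + (n - j)) (Dag.splice i g fun t => g (j + t)) := by
  refine (hg.take (by omega)).splice (hg.drop j) hloop ?_
  rintro i rfl hpos
  exact hg.openTriple_of_loop hij (by omega) hloop

theorem exists_injOn (hg : D.IsActiveWalk S n g) :
    ∃ m f, D.IsActiveWalk S m f ∧ f 0 = g 0 ∧ f m = g n ∧ Set.InjOn f (Set.Iic m) := by
  induction n using Nat.strong_induction_on generalizing g with
  | _ n ih =>
    by_cases hinj : Set.InjOn g (Set.Iic n)
    · exact ⟨n, g, hg, rfl, rfl, hinj⟩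
    obtain ⟨i, j, hij, hjn, hloop⟩ : ∃ i j, i < j ∧ j ≤ n ∧ g i = g j := by
      simp only [Set.InjOn, not_forall] at hinj
      obtain ⟨i, hi, j, hj, hloop, hne⟩ := hinj
      rcases lt_or_gt_of_ne hne with h | h
      · exact ⟨i, j, h, hj, hloop⟩
      · exact ⟨j, i, h, hi, hloop.symm⟩
    obtain ⟨m, f, hf, h0, hm, hinj⟩ := ih _ (by omega) (hg.removeLoop hij hjn hloop)
    refine ⟨m, f, hf, h0.trans (splice_of_le hloop (Nat.zero_le i)), hm.trans ?_, hinj⟩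
    rw [splice_add, Nat.add_sub_cancel' hjn]

end IsActiveWalk

end Dag

namespace GPath

variable {D : Dag V} {S : Set V} {x y : V} {A : V → V → Prop}

/-- The nodes of a path as a sequence that stays at the last node once it is reached. -/
def nodes (p : GPath A x y) (i : ℕ) : V :=
  p.f ⟨min i p.n, Nat.lt_succ_of_le (min_le_right i p.n)⟩

theorem nodes_of_le (p : GPath A x y) {i : ℕ} (hi : i ≤ p.n) :
    p.nodes i = p.f ⟨i, Nat.lt_succ_of_le hi⟩ := by
  simp only [nodes, min_eq_left hi]

theorem nodes_zero (p : GPath A x y) : p.nodes 0 = x := by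
  rw [p.nodes_of_le (Nat.zero_le _), p.first]

theorem nodes_n (p : GPath A x y) : p.nodes p.n = y := by
  rw [p.nodes_of_le le_rfl, p.last]

theorem nodes_succ_ne (p : GPath A x y) {i : ℕ} (hi : i < p.n) : p.nodes (i + 1) ≠ x := by
  rw [p.nodes_of_le hi]
  exact fun h => Nat.succ_ne_zero i (Fin.mk.inj (p.inj (h.trans p.first.symm)))

theorem reflTransGen_nodes (p : GPath A x y) {R : V → V → Prop} {m : ℕ} (hm : m ≤ p.n)
    (hR : ∀ i, m ≤ i → i < p.n → R (p.nodes i) (p.nodes (i + 1))) :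
    ReflTransGen R (p.nodes m) y := by
  have := ReflTransGen.lift (p := R) p.nodes (fun _ _ h => h) _ _ (reflTransGen_of_succ_of_le
    (fun i j => R (p.nodes i) (p.nodes j)) (fun i hi => hR i hi.1 hi.2) hm)
  rwa [Function.onFun, p.nodes_n] at this

theorem not_blocked_iff (p : GPath A x y) :
    ¬ p.Blocked D S ↔ ∀ i, i + 1 < p.n →
      D.OpenTriple S (p.nodes i) (p.nodes (i + 1)) (p.nodes (i + 2)) := by
  have hcoll (i : ℕ) (hi : i + 1 < p.n) : p.ColliderAt D.edge (i + 1) ↔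
      D.edge (p.nodes i) (p.nodes (i + 1)) ∧ D.edge (p.nodes (i + 2)) (p.nodes (i + 1)) := by
    rw [p.nodes_of_le (by omega), p.nodes_of_le hi.le, p.nodes_of_le (by omega)]
    exact ⟨fun ⟨_, _, h⟩ => h, fun h => ⟨Nat.succ_pos i, hi, h⟩⟩
  constructor
  · intro hp i hi
    rw [Dag.OpenTriple, ← hcoll i hi, p.nodes_of_le hi.le]
    refine ⟨fun hc hS => hp ⟨i + 1, Nat.succ_pos i, hi, .inl ⟨hc, hS⟩⟩, fun hc => ?_⟩
    by_contra hS
    exact hp ⟨i + 1, Nat.succ_pos i, hi, .inr ⟨hc, fun d hd hdS => hS ⟨d, hdS, hd⟩⟩⟩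
  · rintro hopen ⟨i, hpos, hi, hblock⟩
    obtain ⟨i, rfl⟩ := Nat.exists_eq_add_one.2 hpos
    have := hopen i hi
    rw [Dag.OpenTriple, ← hcoll i hi, p.nodes_of_le hi.le] at this
    rcases hblock with ⟨hc, hS⟩ | ⟨hc, hS⟩
    · exact this.1 hc hS
    · obtain ⟨d, hdS, hd⟩ := this.2 hc
      exact hS d hd hdS

end GPath

namespace Dag

variable {D D' : Dag V} {S : Set V} {a b c p u v w x y : V}

theorem not_dSep_iff_exists_isActiveWalk :
    ¬ D.dSep x y S ↔ ∃ n g, D.IsActiveWalk S n g ∧ g 0 = x ∧ g n = y := by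
  simp only [dSep, not_forall]
  constructor
  · rintro ⟨p, hp⟩
    refine ⟨p.n, p.nodes, ⟨fun i hi => ?_, p.not_blocked_iff.1 hp⟩, p.nodes_zero, p.nodes_n⟩
    rw [p.nodes_of_le hi.le, p.nodes_of_le hi]
    exact p.adj ⟨i, hi⟩
  · rintro ⟨n, g, hg, rfl, rfl⟩
    obtain ⟨m, f, hf, h0, hm, hinj⟩ := hg.exists_injOn
    let p : GPath D.Adj (g 0) (g n) :=
      { n := m
        f := fun i => f i
        inj := fun i j hij => Fin.ext (hinj (Nat.le_of_lt_succ i.2) (Nat.le_of_lt_succ j.2) hij)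
        first := h0
        last := hm
        adj := fun i => hf.adj i i.2 }
    refine ⟨p, p.not_blocked_iff.2 fun i hi => ?_⟩
    rw [p.nodes_of_le (by omega), p.nodes_of_le hi.le, p.nodes_of_le (by omega)]
    exact hf.openTriple i hi

/-! ### The Bayes ball -/

/-- The two ways in which the ball of the Bayes-ball algorithm can leave a node. -/
inductive Exit
  | child
  | parent

/-- The ball moves from `u` to `w` along an edge of `D`, in the given direction. -/
def Moves (D : Dag V) : Exit → V → V → Prop
  | .child, u, w => D.edge u w
  | .parent, u, w => D.edge w u

/-- Shachter's Bayes ball: `D.Passes S x e u` says that a ball sent out from `x` can leave `u`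
towards every child, respectively every parent, of `u`. -/
inductive Passes (D : Dag V) (S : Set V) (x : V) : Exit → V → Prop
  | start (e : Exit) : Passes D S x e x
  | through {u w : V} : Passes D S x .child u → D.edge u w → w ∉ S → Passes D S x .child w
  | bounce {u w : V} : Passes D S x .child u → D.edge u w → w ∈ S → Passes D S x .parent w
  | up (e : Exit) {u w : V} : Passes D S x .parent u → D.edge w u → w ∉ S → Passes D S x e w

/-- The Bayes ball sent out from `x` arrives at `y`. -/
def Reaches (D : Dag V) (S : Set V) (x y : V) : Prop :=
  y = x ∨ ∃ e u, D.Passes S x e u ∧ D.Moves e u y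

theorem Adj.exists_moves (h : D.Adj u w) : ∃ e, D.Moves e u w :=
  h.elim (fun h => ⟨.child, h⟩) fun h => ⟨.parent, h⟩

theorem Moves.adj : ∀ {e : Exit}, D.Moves e u w → D.Adj u w
  | .child, h => .inl h
  | .parent, h => .inr h

/-- The ball rolls down to a descendant in `S`, bounces there, and rolls back up. -/
theorem Passes.of_mem_ancestors (hu : D.Passes S x .child u) (huw : D.edge u w)
    (hw : w ∈ D.ancestors S) : D.Passes S x .parent w := by
  obtain ⟨s, hs, hanc⟩ := hw
  induction hanc using ReflTransGen.head_induction_on generalizing u with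
  | refl => exact hu.bounce huw hs
  | @head w c hwc _ ih =>
    by_cases hwS : w ∈ S
    · exact hu.bounce huw hwS
    · exact (ih (hu.through huw hwS) hwc).up _ hwc hwS

theorem Passes.of_openTriple {e e' : Exit} (hu : D.Passes S x e u) (huv : D.Moves e u v)
    (hvw : D.Moves e' v w) (hopen : D.OpenTriple S u v w) : D.Passes S x e' v := by
  cases e with
  | parent => exact hu.up e' huv (hopen.1 fun h => edge_asymm huv h.1)
  | child =>
    cases e' with
    | child => exact hu.through huv (hopen.1 fun h => edge_asymm hvw h.2)
    | parent => exact hu.of_mem_ancestors huv (hopen.2 ⟨huv, hvw⟩)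

theorem IsActiveWalk.passes {n : ℕ} {g : ℕ → V} (hg : D.IsActiveWalk S n g) {i : ℕ} (hi : i < n) :
    ∃ e, D.Passes S (g 0) e (g i) ∧ D.Moves e (g i) (g (i + 1)) := by
  induction i with
  | zero =>
    obtain ⟨e, he⟩ := (hg.adj 0 hi).exists_moves
    exact ⟨e, .start e, he⟩
  | succ i ih =>
    obtain ⟨e, hpass, hmove⟩ := ih (by omega)
    obtain ⟨e', hmove'⟩ := (hg.adj (i + 1) hi).exists_moves
    exact ⟨e', hpass.of_openTriple hmove hmove' (hg.openTriple i hi), hmove'⟩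

theorem IsActiveWalk.reaches {n : ℕ} {g : ℕ → V} (hg : D.IsActiveWalk S n g) :
    D.Reaches S (g 0) (g n) := by
  cases n with
  | zero => exact .inl rfl
  | succ n =>
    obtain ⟨e, h⟩ := hg.passes (Nat.lt_succ_self n)
    exact .inr ⟨e, g n, h⟩

/-- Some active walk from `x` has `u → w` or `u ← w` as its last edge. -/
def WalksAlong (D : Dag V) (S : Set V) (x u w : V) : Prop :=
  ∃ n g, D.IsActiveWalk S (n + 1) g ∧ g 0 = x ∧ g n = u ∧ g (n + 1) = w

theorem isActiveWalk_edge (h : D.Adj u w) :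
    D.IsActiveWalk S 1 fun t => if t = 0 then u else w where
  adj i hi := by simpa [Nat.lt_one_iff.1 hi] using h
  openTriple i hi := by omega

theorem WalksAlong.start (h : D.Adj x w) : D.WalksAlong S x x w :=
  ⟨0, _, isActiveWalk_edge h, rfl, rfl, rfl⟩

theorem WalksAlong.step (h : D.WalksAlong S x u v) (hvw : D.Adj v w)
    (hopen : D.OpenTriple S u v w) : D.WalksAlong S x v w := by
  obtain ⟨n, g, hg, h0, rfl, rfl⟩ := h
  refine ⟨n + 1, _, hg.splice (isActiveWalk_edge hvw) rfl ?_, ?_, ?_, splice_add _ _ _ 1⟩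
  · rintro i hi -
    obtain rfl : i = n := by omega
    exact hopen
  · exact (splice_of_le rfl (Nat.zero_le _)).trans h0
  · exact splice_add (n + 1) _ _ 0

theorem Passes.walksAlong {e : Exit} (h : D.Passes S x e u) (huw : D.Moves e u w) :
    D.WalksAlong S x u w := by
  induction h generalizing w with
  | start e => exact .start huw.adj
  | through _ huv hvS ih =>
    exact (ih huv).step huw.adj ⟨fun _ => hvS, fun h => (edge_asymm huw h.2).elim⟩
  | bounce _ huv hvS ih =>
    exact (ih huv).step huw.adj ⟨fun h => (h ⟨huv, huw⟩).elim, fun _ => D.subset_ancestors S hvS⟩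
  | up e _ huv hvS ih =>
    exact (ih huv).step huw.adj ⟨fun _ => hvS, fun h => (edge_asymm huv h.1).elim⟩

theorem dSep_iff_not_reaches : D.dSep x y S ↔ ¬ D.Reaches S x y := by
  rw [← not_iff_not, not_not, not_dSep_iff_exists_isActiveWalk]
  constructor
  · rintro ⟨n, g, hg, rfl, rfl⟩
    exact hg.reaches
  · rintro (rfl | ⟨e, u, hpass, hmove⟩)
    · exact ⟨0, fun _ => y, ⟨fun i hi => by omega, fun i hi => by omega⟩, rfl, rfl⟩
    · obtain ⟨n, g, hg, h0, -, hw⟩ := hpass.walksAlong hmove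
      exact ⟨n + 1, g, hg, h0, hw⟩

theorem not_dSep_of_adj (h : D.Adj x y) : ¬ D.dSep x y S := by
  obtain ⟨e, he⟩ := h.exists_moves
  exact fun hsep => dSep_iff_not_reaches.1 hsep (.inr ⟨e, x, .start e, he⟩)

theorem not_dSep_of_directed (h : ReflTransGen (fun u w => D.edge u w ∧ w ∉ S) x y) :
    ¬ D.dSep x y S := by
  suffices D.Reaches S x y ∧ D.Passes S x .child y from
    fun hsep => dSep_iff_not_reaches.1 hsep this.1
  induction h with
  | refl => exact ⟨.inl rfl, .start _⟩
  | tail _ huw ih => exact ⟨.inr ⟨.child, _, ih.2, huw.1⟩, ih.2.through huw.1 huw.2⟩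

/-- The local Markov property. -/
theorem dSep_parents (hxy : ¬ D.Anc x y) (hyx : ¬ D.edge y x) : D.dSep x y (D.Pa x) := by
  have hpass : ∀ {e u}, D.Passes (D.Pa x) x e u →
      D.Anc x u ∧ (e = .parent → u = x) := by
    intro e u h
    induction h with
    | start e => exact ⟨.refl, fun _ => rfl⟩
    | through _ huw _ ih => exact ⟨ih.1.tail huw, by simp⟩
    | bounce _ huw hw ih =>
      exact (D.acyclic _ _ hw (ih.1.tail huw)).elim
    | up e _ huw hw ih =>
      obtain rfl := ih.2 rfl
      exact (hw huw).elim
  rw [dSep_iff_not_reaches]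
  rintro (rfl | ⟨e, u, h, hmove⟩)
  · exact hxy .refl
  cases e with
  | child => exact hxy ((hpass h).1.tail hmove)
  | parent =>
    obtain rfl := (hpass h).2 rfl
    exact hyx hmove

theorem dSep.edge_of_adj (hsep : D.dSep x y S) (hc : c ∉ S) (hxc : D.Adj x c)
    (hcy : D.Adj c y) : D.edge x c ∧ D.edge y c := by
  obtain ⟨e, hx⟩ := hxc.exists_moves
  obtain ⟨e', hy⟩ := hcy.exists_moves
  by_contra hcoll
  refine dSep_iff_not_reaches.1 hsep (.inr ⟨e', c, ?_, hy⟩)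
  refine (Passes.start e).of_openTriple hx hy ⟨fun _ => hc, fun h => (hcoll h).elim⟩

/-! ### Patterns and covered edges -/

/-- An immorality `a → c ← b` (also called a v-structure): `a` and `b` are not adjacent. -/
structure Immorality (D : Dag V) (a c b : V) : Prop where
  ne : a ≠ b
  not_adj : ¬ D.Adj a b
  left : D.edge a c
  right : D.edge b c

theorem Immorality.symm (h : D.Immorality a c b) : D.Immorality b c a :=
  ⟨h.ne.symm, fun hba => h.not_adj hba.symm, h.right, h.left⟩

/-- The DAGs have the same pattern: the same adjacencies and the same immoralities. -/
structure SamePattern (D D' : Dag V) : Prop where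
  adj_iff : ∀ {a b}, D.Adj a b ↔ D'.Adj a b
  immorality_iff : ∀ {a c b}, D.Immorality a c b ↔ D'.Immorality a c b

namespace SamePattern

theorem refl (D : Dag V) : D.SamePattern D := ⟨Iff.rfl, Iff.rfl⟩

theorem symm (h : D.SamePattern D') : D'.SamePattern D := ⟨h.adj_iff.symm, h.immorality_iff.symm⟩

theorem trans {D'' : Dag V} (h : D.SamePattern D') (h' : D'.SamePattern D'') :
    D.SamePattern D'' :=
  ⟨h.adj_iff.trans h'.adj_iff, h.immorality_iff.trans h'.immorality_iff⟩

theorem edge_or (h : D.SamePattern D') (hab : D.edge a b) : D'.edge a b ∨ D'.edge b a :=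
  h.adj_iff.1 (.inl hab)

end SamePattern

theorem exists_dSep_of_not_adj (hne : x ≠ y) (hxy : ¬ D.Adj x y) :
    ∃ S, D.dSep x y S ∨ D.dSep y x S := by
  by_cases hanc : D.Anc x y
  · exact ⟨_, .inr (dSep_parents (fun h => hne (hanc.antisymm h)) fun h => hxy (.inl h))⟩
  · exact ⟨_, .inl (dSep_parents hanc fun h => hxy (.inr h))⟩

namespace MEquiv

theorem symm (h : D.MEquiv D') : D'.MEquiv D := fun x y S => (h x y S).symm

theorem trans {D'' : Dag V} (h : D.MEquiv D') (h' : D'.MEquiv D'') : D.MEquiv D'' :=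
  fun x y S => (h x y S).trans (h' x y S)

theorem adj (h : D.MEquiv D') (hab : D.Adj a b) : D'.Adj a b := by
  by_contra hab'
  have hne : a ≠ b := by
    rintro rfl
    exact hab.elim (D.edge_irrefl a) (D.edge_irrefl a)
  obtain ⟨S, hS | hS⟩ := exists_dSep_of_not_adj hne hab'
  · exact not_dSep_of_adj hab ((h a b S).2 hS)
  · exact not_dSep_of_adj hab.symm ((h b a S).2 hS)

theorem immorality (h : D.MEquiv D') (himm : D.Immorality a c b) : D'.Immorality a c b := by
  wlog hanc : ¬ D.Anc a b generalizing a b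
  · exact (this himm.symm fun hba => himm.ne ((not_not.1 hanc).antisymm hba)).symm
  have hsep : D'.dSep a b (D.Pa a) :=
    (h a b _).1 (dSep_parents hanc fun hba => himm.not_adj (.inr hba))
  obtain ⟨hac, hbc⟩ := hsep.edge_of_adj (c := c) (edge_asymm himm.left)
    (h.adj (.inl himm.left)) (h.adj (.inr himm.right))
  exact ⟨himm.ne, fun hab => himm.not_adj (h.symm.adj hab), hac, hbc⟩

theorem samePattern (h : D.MEquiv D') : D.SamePattern D' :=
  ⟨⟨h.adj, h.symm.adj⟩, ⟨h.immorality, h.symm.immorality⟩⟩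

end MEquiv

/-- The edge `a → b` is covered: the parents of `b` are `a` and the parents of `a`. -/
def IsCovered (D : Dag V) (a b : V) : Prop := ∀ p, D.edge p b ↔ p = a ∨ D.edge p a

theorem IsCovered.edge (h : D.IsCovered a b) : D.edge a b := (h a).2 (.inl rfl)

theorem IsCovered.ne (h : D.IsCovered a b) : a ≠ b := by
  rintro rfl
  exact D.edge_irrefl a h.edge

/-- The DAG `D'` arises from `D` by reversing the covered edge `a → b`. -/
structure CoveredReversal (D D' : Dag V) (a b : V) : Prop where
  isCovered : D.IsCovered a b
  isCovered_rev : D'.IsCovered b a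
  edge_left_iff : ∀ p, D.edge p a ↔ D'.edge p b
  edge_iff : ∀ {p w}, w ≠ a → w ≠ b → (D.edge p w ↔ D'.edge p w)

namespace CoveredReversal

theorem symm (h : D.CoveredReversal D' a b) : D'.CoveredReversal D b a :=
  ⟨h.isCovered_rev, h.isCovered, fun p => (h.edge_left_iff p).symm,
    fun hb ha => (h.edge_iff ha hb).symm⟩

theorem edge_right (h : D.CoveredReversal D' a b) (hp : D.edge p b) (hpa : p ≠ a) :
    D'.edge p b := (h.edge_left_iff p).1 (((h.isCovered p).1 hp).resolve_left hpa)

end CoveredReversal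

theorem Passes.reaches {e : Exit} (h : D.Passes S x e u) : D.Reaches S x u := by
  cases h with
  | start e => exact .inl rfl
  | through hu huw _ => exact .inr ⟨.child, _, hu, huw⟩
  | bounce hu huw _ => exact .inr ⟨.child, _, hu, huw⟩
  | up e hu huw _ => exact .inr ⟨.parent, _, hu, huw⟩

/-- The ball of `D` can leave `a` or `b` upwards. If `a` and `b` are joined by a covered edge, the
two alternatives let it arrive at the same common parents. -/
def Rises (D : Dag V) (S : Set V) (x a b : V) : Prop :=
  D.Passes S x .parent a ∨ D.Passes S x .parent b

/-- The ball of `D` can go on after having been sent along `a → b`. -/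
def Enters (D : Dag V) (S : Set V) (x a b : V) : Prop :=
  (b ∉ S → D.Passes S x .child b) ∧ (b ∈ S → D.Rises S x a b)

/-- What the ball of `D'` can do whenever, before reversal of the covered edge `a → b`, the ball
can leave `u` in the given direction. At `a` and `b` the two balls do not behave alike, as moving
along `a → b` may have to be replaced by moving along `a ← b`. -/
def Mirrors (D' : Dag V) (S : Set V) (x a b : V) : Exit → V → Prop
  | .child, u => D'.Passes S x .child u ∧ (u = a → D'.Enters S x a b)
  | .parent, u => (u ≠ a → u ≠ b → D'.Passes S x .parent u) ∧
      (u = a ∨ u = b → D'.Rises S x a b) ∧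
      (u = b → D'.Reaches S x a ∧ (a ∉ S → D'.Passes S x .child a ∧ D'.Enters S x a b))

namespace CoveredReversal

variable {e : Exit}

theorem enters_of_passes (h : D.CoveredReversal D' a b) (ha : D'.Passes S x .parent a) :
    D'.Enters S x a b :=
  ⟨ha.up _ h.isCovered_rev.edge, fun _ => .inl ha⟩

theorem enters_of_edge (h : D.CoveredReversal D' a b) (hu : D'.Passes S x .child u)
    (hua : D.edge u a) : D'.Enters S x a b :=
  have hub := (h.edge_left_iff u).1 hua
  ⟨hu.through hub, fun hb => .inr (hu.bounce hub hb)⟩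

theorem edge_left (h : D.CoveredReversal D' a b) (hpa : D.edge p a) : D'.edge p a :=
  (h.isCovered_rev p).2 (.inr ((h.edge_left_iff p).1 hpa))

theorem passes_of_rises (h : D.CoveredReversal D' a b) (hrise : D'.Rises S x a b)
    (hpa : D.edge p a) (hp : p ∉ S) (e : Exit) : D'.Passes S x e p :=
  hrise.elim (fun ha => ha.up e (h.edge_left hpa) hp)
    fun hb => hb.up e ((h.edge_left_iff p).1 hpa) hp

theorem mirrors_of_forall (h : D.CoveredReversal D' a b) (hw : ∀ e, D'.Passes S x e w) :
    ∀ e, D'.Mirrors S x a b e w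
  | .child => ⟨hw _, by rintro rfl; exact h.enters_of_passes (hw _)⟩
  | .parent => by
    refine ⟨fun _ _ => hw _, ?_, ?_⟩
    · rintro (rfl | rfl)
      exacts [.inl (hw _), .inr (hw _)]
    · rintro rfl
      exact ⟨.inr ⟨.child, w, hw _, h.isCovered_rev.edge⟩, fun ha =>
        ⟨(hw _).through h.isCovered_rev.edge ha, fun _ => hw _, fun _ => .inr (hw _)⟩⟩

theorem mirrors_through (h : D.CoveredReversal D' a b) (hu : D'.Mirrors S x a b .child u)
    (huw : D.edge u w) (hw : w ∉ S) : D'.Mirrors S x a b .child w := by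
  obtain ⟨hpass, henter⟩ := hu
  by_cases hwa : w = a
  · subst hwa
    exact ⟨hpass.through (h.edge_left huw) hw, fun _ => h.enters_of_edge hpass huw⟩
  refine ⟨?_, fun hwa' => (hwa hwa').elim⟩
  by_cases hwb : w = b
  · subst hwb
    by_cases hua : u = a
    · exact (henter hua).1 hw
    · exact hpass.through (h.edge_right huw hua) hw
  · exact hpass.through ((h.edge_iff hwa hwb).1 huw) hw

theorem mirrors_bounce (h : D.CoveredReversal D' a b) (hu : D'.Mirrors S x a b .child u)
    (huw : D.edge u w) (hw : w ∈ S) : D'.Mirrors S x a b .parent w := by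
  obtain ⟨hpass, henter⟩ := hu
  refine ⟨fun hwa hwb => hpass.bounce ((h.edge_iff hwa hwb).1 huw) hw, ?_, ?_⟩
  · rintro (rfl | rfl)
    · exact .inl (hpass.bounce (h.edge_left huw) hw)
    · by_cases hua : u = a
      · exact (henter hua).2 hw
      · exact .inr (hpass.bounce (h.edge_right huw hua) hw)
  · rintro rfl
    by_cases hua : u = a
    · subst hua
      exact ⟨hpass.reaches, fun _ => ⟨hpass, henter rfl⟩⟩
    · have hua' : D.edge u a := (h.isCovered u).1 huw |>.resolve_left hua
      exact ⟨.inr ⟨.child, u, hpass, h.edge_left hua'⟩, fun ha =>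
        ⟨hpass.through (h.edge_left hua') ha, h.enters_of_edge hpass hua'⟩⟩

theorem mirrors_up (h : D.CoveredReversal D' a b) (hu : D'.Mirrors S x a b .parent u)
    (hwu : D.edge w u) (hw : w ∉ S) (e : Exit) : D'.Mirrors S x a b e w := by
  obtain ⟨hgeneric, hrise, hb⟩ := hu
  by_cases hua : u = a
  · subst hua
    exact h.mirrors_of_forall (h.passes_of_rises (hrise (.inl rfl)) hwu hw) e
  by_cases hub : u = b
  · subst hub
    by_cases hwa : w = a
    · subst hwa
      obtain ⟨hpass, henter⟩ := (hb rfl).2 hw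
      cases e with
      | child => exact ⟨hpass, fun _ => henter⟩
      | parent =>
        exact ⟨fun hne => (hne rfl).elim, fun _ => hrise (.inr rfl), fun h' =>
          (h.isCovered.ne h').elim⟩
    · have hwa' : D.edge w a := (h.isCovered w).1 hwu |>.resolve_left hwa
      exact h.mirrors_of_forall (h.passes_of_rises (hrise (.inr rfl)) hwa' hw) e
  · exact h.mirrors_of_forall
      (fun e => (hgeneric hua hub).up e ((h.edge_iff hua hub).1 hwu) hw) e

theorem mirrors (h : D.CoveredReversal D' a b) (hu : D.Passes S x e u) :
    D'.Mirrors S x a b e u := by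
  induction hu with
  | start e => exact h.mirrors_of_forall .start e
  | through _ huw hw ih => exact h.mirrors_through ih huw hw
  | bounce _ huw hw ih => exact h.mirrors_bounce ih huw hw
  | up e _ hwu hw ih => exact h.mirrors_up ih hwu hw e

theorem reaches_of_rises (h : D.CoveredReversal D' a b) (hrise : D'.Rises S x a b)
    (hpa : D.edge p a) : D'.Reaches S x p :=
  hrise.elim (fun ha => .inr ⟨.parent, a, ha, h.edge_left hpa⟩)
    fun hb => .inr ⟨.parent, b, hb, (h.edge_left_iff p).1 hpa⟩

theorem reaches_of_enters (h : D.CoveredReversal D' a b) (henter : D'.Enters S x a b) :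
    D'.Reaches S x b := by
  by_cases hb : b ∈ S
  · exact (henter.2 hb).elim (fun ha => .inr ⟨.parent, a, ha, h.isCovered_rev.edge⟩)
      Passes.reaches
  · exact (henter.1 hb).reaches

theorem reaches (h : D.CoveredReversal D' a b) (hy : D.Reaches S x y) : D'.Reaches S x y := by
  obtain rfl | ⟨e, u, hu, huy⟩ := hy
  · exact .inl rfl
  have hmirror := h.mirrors hu
  cases e with
  | child =>
    obtain ⟨hpass, henter⟩ := hmirror
    by_cases hya : y = a
    · subst hya
      exact .inr ⟨.child, u, hpass, h.edge_left huy⟩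
    by_cases hyb : y = b
    · subst hyb
      by_cases hua : u = a
      · exact h.reaches_of_enters (henter hua)
      · exact .inr ⟨.child, u, hpass, h.edge_right huy hua⟩
    · exact .inr ⟨.child, u, hpass, (h.edge_iff hya hyb).1 huy⟩
  | parent =>
    obtain ⟨hgeneric, hrise, hb⟩ := hmirror
    by_cases hua : u = a
    · subst hua
      exact h.reaches_of_rises (hrise (.inl rfl)) huy
    by_cases hub : u = b
    · subst hub
      obtain rfl | hya := (h.isCovered y).1 huy
      · exact (hb rfl).1
      · exact h.reaches_of_rises (hrise (.inr rfl)) hya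
    · exact .inr ⟨.parent, u, hgeneric hua hub, (h.edge_iff hua hub).1 huy⟩

theorem mequiv (h : D.CoveredReversal D' a b) : D.MEquiv D' := fun _ _ _ => by
  rw [dSep_iff_not_reaches, dSep_iff_not_reaches, not_iff_not]
  exact ⟨h.reaches, h.symm.reaches⟩

end CoveredReversal

theorem reflTransGen_or_of_insert {E : V → V → Prop}
    (h : ReflTransGen (fun p q => E p q ∨ p = b ∧ q = a) u w) :
    ReflTransGen E u w ∨ ReflTransGen E u b ∧ ReflTransGen E a w := by
  induction h with
  | refl => exact .inl .refl
  | tail _ hstep ih =>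
    rcases hstep with hstep | ⟨rfl, rfl⟩
    · exact ih.imp (.tail · hstep) (And.imp_right (.tail · hstep))
    · exact .inr ⟨ih.elim id And.left, .refl⟩

/-- The graph obtained from `D` by reversing a covered edge. -/
def IsCovered.reverse (h : D.IsCovered a b) : Dag V where
  edge p q := (D.edge p q ∧ ¬ (p = a ∧ q = b)) ∨ p = b ∧ q = a
  acyclic := by
    set E : V → V → Prop := fun p q => D.edge p q ∧ ¬ (p = a ∧ q = b)
    have hanc {p q : V} (hpq : ReflTransGen E p q) : D.Anc p q :=
      ReflTransGen.mono (fun _ _ => And.left) _ _ hpq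
    have hab : ¬ ReflTransGen E a b := by
      intro hab
      rcases hab.cases_tail with hba | ⟨p, hap, hpb, hne⟩
      · exact h.ne hba.symm
      · have hpa : D.edge p a := ((h p).1 hpb).resolve_left fun hpa => hne ⟨hpa, rfl⟩
        exact D.acyclic p a hpa (hanc hap)
    rintro p q (hpq | ⟨rfl, rfl⟩) hqp
    · rcases reflTransGen_or_of_insert hqp with hqp | ⟨hqb, hap⟩
      · exact D.acyclic p q hpq.1 (hanc hqp)
      · exact hab ((hap.tail hpq).trans hqb)
    · exact hab ((reflTransGen_or_of_insert hqp).elim id And.left)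

theorem IsCovered.coveredReversal (h : D.IsCovered a b) : D.CoveredReversal h.reverse a b := by
  have hne := h.ne
  refine ⟨h, fun p => ?_, fun p => ?_, fun hwa hwb => ?_⟩
  · have := h p
    simp only [reverse]
    grind [D.edge_irrefl a, edge_asymm h.edge]
  · have := h p
    simp only [reverse]
    grind [D.edge_irrefl a, edge_asymm h.edge]
  · simp [reverse, hwa, hwb]

theorem wellFounded_transGen [Finite V] (D : Dag V) : WellFounded (TransGen D.edge) := by
  have : IsTrans V (TransGen D.edge) := ⟨fun _ _ _ => .trans⟩
  have : Std.Irrefl (TransGen D.edge) := ⟨D.not_transGen_self⟩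
  exact Finite.wellFounded_of_trans_of_irrefl _

theorem wellFounded_swap_transGen [Finite V] (D : Dag V) :
    WellFounded (Function.swap (TransGen D.edge)) := by
  have : IsTrans V (TransGen D.edge) := ⟨fun _ _ _ => .trans⟩
  have : Std.Irrefl (TransGen D.edge) := ⟨D.not_transGen_self⟩
  exact Finite.wellFounded_of_trans_of_irrefl _

namespace SamePattern

/-- Chickering's choice: take the first `b` that is the head of a reversed edge, and then the last
tail `a` of a reversed edge into `b`. -/
theorem exists_isCovered [Finite V] (h : D.SamePattern D') (hab : D.edge a b)
    (hba : D'.edge b a) : ∃ a b, D.IsCovered a b ∧ D'.edge b a := by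
  obtain ⟨b, ⟨a₀, ha₀⟩, hfirst⟩ :=
    D.wellFounded_transGen.has_min {b | ∃ a, D.edge a b ∧ D'.edge b a} ⟨b, a, hab, hba⟩
  obtain ⟨a, ⟨hab, hba⟩, hlast⟩ :=
    D.wellFounded_swap_transGen.has_min {a | D.edge a b ∧ D'.edge b a} ⟨a₀, ha₀⟩
  have hkept {u w : V} (huw : D.edge u w) (hwb : TransGen D.edge w b) : D'.edge u w :=
    (h.edge_or huw).resolve_right fun hwu => hfirst w ⟨u, huw, hwu⟩ hwb
  refine ⟨a, b, fun p => ⟨fun hpb => or_iff_not_imp_left.2 fun hpa => ?_, ?_⟩, hba⟩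
  · have hadj : D.Adj p a := by
      by_contra hadj
      exact edge_asymm hba (h.immorality_iff.1 ⟨hpa, hadj, hpb, hab⟩).right
    refine hadj.resolve_right fun hap => ?_
    rcases h.edge_or hpb with hpb' | hbp
    · exact D'.acyclic b a hba (.head (hkept hap (.single hpb)) (.single hpb'))
    · exact hlast p ⟨hpb, hbp⟩ (.single hap)
  · rintro (rfl | hpa)
    · exact hab
    have hpb : ¬ D.edge b p := fun hbp => D.acyclic b p hbp (.head hpa (.single hab))
    have hne : p ≠ b := by
      rintro rfl
      exact edge_asymm hab hpa
    by_contra hpb'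
    exact edge_asymm hab (h.immorality_iff.2 ⟨hne, fun hadj => (h.adj_iff.2 hadj).elim hpb' hpb,
      hkept hpa (.single hab), hba⟩).right

theorem eq_of_forall_edge (h : D.SamePattern D') (hsub : ∀ a b, D.edge a b → D'.edge a b) :
    D = D' := by
  have hedge : D.edge = D'.edge := by
    ext a b
    refine ⟨hsub a b, fun hab => (h.symm.edge_or hab).resolve_right fun hba => ?_⟩
    exact edge_asymm hab (hsub b a hba)
  cases D
  cases D'
  congr

end SamePattern

/-- The edges of `D` that are reversed in `D'`. -/
def reversedEdges (D D' : Dag V) : Set (V × V) := {q | D.edge q.1 q.2 ∧ D'.edge q.2 q.1}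

theorem CoveredReversal.reversedEdges_ssubset {D₁ : Dag V} (h : D.CoveredReversal D₁ a b)
    (hba : D'.edge b a) : D₁.reversedEdges D' ⊂ D.reversedEdges D' := by
  refine (Set.ssubset_iff_of_subset ?_).2
    ⟨(a, b), ⟨h.isCovered.edge, hba⟩, fun hrev => edge_asymm hrev.1 h.isCovered_rev.edge⟩
  rintro ⟨u, w⟩ ⟨huw, hwu⟩
  refine ⟨?_, hwu⟩
  by_cases hwa : w = a
  · subst hwa
    obtain rfl | hub := (h.isCovered_rev u).1 huw
    · exact (edge_asymm hba hwu).elim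
    · exact (h.edge_left_iff u).2 hub
  by_cases hwb : w = b
  · subst hwb
    exact (h.isCovered u).2 (.inr ((h.edge_left_iff u).2 huw))
  · exact (h.edge_iff hwa hwb).2 huw

/-- The theorem of Verma and Pearl. -/
theorem mequiv_iff_samePattern [Finite V] : D.MEquiv D' ↔ D.SamePattern D' := by
  refine ⟨MEquiv.samePattern, fun h => ?_⟩
  induction hr : D.reversedEdges D' using WellFoundedLT.induction generalizing D with
  | ind r ih =>
    subst hr
    by_cases hsub : ∀ a b, D.edge a b → D'.edge a b
    · rw [h.eq_of_forall_edge hsub]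
      exact fun _ _ _ => Iff.rfl
    · simp only [not_forall] at hsub
      obtain ⟨a, b, hab, hab'⟩ := hsub
      obtain ⟨a, b, hcov, hba⟩ := h.exists_isCovered hab ((h.edge_or hab).resolve_left hab')
      have hrev := hcov.coveredReversal
      exact hrev.mequiv.trans
        (ih _ (hrev.reversedEdges_ssubset hba) (hrev.mequiv.samePattern.symm.trans h) rfl)

end Dag

/-! ### Perfect orderings of chordal graphs -/

section PerfectRank

variable {H : SimpleGraph V} {W : Finset V} {K : Set V} {r : V → ℕ} {t u v w x z : V}

/-- The vertex `s` of the subgraph induced on `W` is simplicial: its neighbours are pairwise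
adjacent. -/
structure IsSimplicialOn (H : SimpleGraph V) (W : Finset V) (s : V) : Prop where
  mem : s ∈ W
  isClique : H.IsClique {u | u ∈ W ∧ H.Adj s u}

/-- Every finite induced subgraph has a simplicial vertex. For finite graphs this is
chordality. -/
def HasSimplicialVertices (H : SimpleGraph V) : Prop :=
  ∀ W : Finset V, W.Nonempty → ∃ s, IsSimplicialOn H W s

theorem HasSimplicialVertices.exists_notMem (hH : HasSimplicialVertices H) (hK : H.IsClique K)
    (hWK : ¬ (W : Set V) ⊆ K) : ∃ z, IsSimplicialOn H W z ∧ z ∉ K := by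
  classical
  induction W using Finset.strongInduction generalizing K with
  | H W ih =>
    obtain ⟨w, hwW, hwK⟩ := Set.not_subset.1 hWK
    obtain ⟨s, hsW, hs⟩ := hH W ⟨w, hwW⟩
    by_cases hsK : s ∈ K
    swap
    · exact ⟨s, ⟨hsW, hs⟩, hsK⟩
    by_cases hall : ((W.erase s : Finset V) : Set V) ⊆ {u | u ∈ W ∧ H.Adj s u}
    · have hW : H.IsClique (insert s {u | u ∈ W ∧ H.Adj s u}) := hs.insert fun u hu _ => hu.2
      refine ⟨w, ⟨hwW, hW.subset fun u hu => or_iff_not_imp_left.2 fun hus => ?_⟩, hwK⟩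
      exact hall (Finset.mem_erase.2 ⟨hus, hu.1⟩)
    · obtain ⟨z, ⟨hzW, hz⟩, hsz⟩ := ih _ (Finset.erase_ssubset hsW) hs hall
      obtain ⟨hne, hzW⟩ := Finset.mem_erase.1 hzW
      have hsz : ¬ H.Adj s z := fun h => hsz ⟨hzW, h⟩
      refine ⟨z, ⟨hzW, hz.subset ?_⟩, fun hzK => hsz (hK hsK hzK hne.symm)⟩
      rintro u ⟨huW, hzu⟩
      refine ⟨Finset.mem_erase.2 ⟨?_, huW⟩, hzu⟩
      rintro rfl
      exact hsz hzu.symm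

/-- The ranks are distinct, and the neighbours of lower rank of any vertex of `W` are pairwise
adjacent: in the order of increasing rank, the vertices of `W` form the reverse of a perfect
elimination ordering. -/
structure IsPerfectRankOn (H : SimpleGraph V) (W : Set V) (r : V → ℕ) : Prop where
  injOn : Set.InjOn r W
  isClique : ∀ w ∈ W, H.IsClique {u | u ∈ W ∧ H.Adj u w ∧ r u < r w}

theorem IsPerfectRankOn.update_insert [DecidableEq V] {W : Set V} (hr : IsPerfectRankOn H W r)
    {m : ℕ} (hz : z ∉ W) (hcl : H.IsClique {u | u ∈ W ∧ H.Adj u z}) (hm : ∀ w ∈ W, r w < m) :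
    IsPerfectRankOn H (insert z W) (Function.update r z m) := by
  have hself : Function.update r z m z = m := Function.update_self z m r
  have heq : Set.EqOn (Function.update r z m) r W := fun w hw =>
    Function.update_of_ne (ne_of_mem_of_not_mem hw hz) _ _
  refine ⟨(Set.injOn_insert hz).2 ⟨hr.injOn.congr heq.symm, ?_⟩, ?_⟩
  · rintro ⟨w, hw, hwz⟩
    exact (hm w hw).ne ((heq hw).symm.trans (hwz.trans hself))
  · rintro w (rfl | hw)
    · refine hcl.subset ?_
      rintro u ⟨rfl | hu, huw, -⟩
      · exact (H.irrefl huw).elim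
      · exact ⟨hu, huw⟩
    · refine (hr.isClique w hw).subset ?_
      rintro u ⟨rfl | hu, huw, hlt⟩
      · rw [hself, heq hw] at hlt
        exact (hlt.asymm (hm w hw)).elim
      · exact ⟨hu, huw, by rwa [heq hu, heq hw] at hlt⟩

theorem HasSimplicialVertices.exists_isPerfectRankOn {K : Finset V}
    (hH : HasSimplicialVertices H) (hK : H.IsClique (K : Set V)) (hr : Set.InjOn r K)
    (hKW : K ⊆ W) : ∃ r', IsPerfectRankOn H W r' ∧ Set.EqOn r' r K ∧
      ∀ k ∈ K, ∀ w ∈ W, w ∉ K → r' k < r' w := by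
  classical
  induction W using Finset.strongInduction with
  | H W ih =>
    by_cases hWK : W ⊆ K
    · obtain rfl := hKW.antisymm hWK
      exact ⟨r, ⟨hr, fun w _ => hK.subset fun u hu => hu.1⟩, fun _ _ => rfl,
        fun k _ w hw hwK => (hwK hw).elim⟩
    obtain ⟨z, ⟨hzW, hz⟩, hzK⟩ := hH.exists_notMem hK (mod_cast hWK)
    obtain ⟨r', hr', heq, hlt⟩ := ih _ (Finset.erase_ssubset hzW)
      fun k hk => Finset.mem_erase.2 ⟨ne_of_mem_of_not_mem hk hzK, hKW hk⟩
    have hsup {w : V} (hw : w ∈ W) : r' w < W.sup r' + 1 := Nat.lt_succ_of_le (Finset.le_sup hw)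
    have hupdate : IsPerfectRankOn H W (Function.update r' z (W.sup r' + 1)) := by
      have hcl : H.IsClique {u | u ∈ W.erase z ∧ H.Adj u z} :=
        hz.subset fun u hu => And.intro (Finset.mem_of_mem_erase hu.1) hu.2.symm
      have := hr'.update_insert (Finset.notMem_erase z W) hcl
        fun w hw => hsup (Finset.mem_of_mem_erase hw)
      rwa [← Finset.coe_insert, Finset.insert_erase hzW] at this
    have hKne {k : V} (hk : k ∈ K) : k ≠ z := ne_of_mem_of_not_mem hk hzK
    refine ⟨_, hupdate, fun k hk => ?_, fun k hk w hw hwK => ?_⟩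
    · rw [Function.update_of_ne (hKne hk), heq hk]
    · rw [Function.update_of_ne (hKne hk)]
      by_cases hwz : w = z
      · rw [hwz, Function.update_self]
        exact hsup (hKW hk)
      · rw [Function.update_of_ne hwz]
        exact hlt k hk w (Finset.mem_erase.2 ⟨hwz, hw⟩) hwK

/-- The vertices of `H` can be ranked perfectly with `x` first and `v` second. -/
structure IsPerfectRankFrom (H : SimpleGraph V) (x v : V) (r : V → ℕ) : Prop where
  perfect : IsPerfectRankOn H Set.univ r
  lt : r x < r v
  lt_of_ne : ∀ {w}, w ≠ x → w ≠ v → r v < r w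

theorem HasSimplicialVertices.exists_isPerfectRankFrom [Finite V] (hH : HasSimplicialVertices H)
    (hxv : H.Adj x v) : ∃ r, IsPerfectRankFrom H x v r := by
  classical
  have := Fintype.ofFinite V
  have hK : H.IsClique (({x, v} : Finset V) : Set V) := by
    simpa using SimpleGraph.isClique_pair.2 fun _ => hxv
  have hinj : Set.InjOn (fun w => if w = x then 0 else 1) (({x, v} : Finset V) : Set V) := by
    simp [Set.InjOn, hxv.ne.symm]
  obtain ⟨r, hr, heq, hlt⟩ := hH.exists_isPerfectRankOn hK hinj (Finset.subset_univ _)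
  refine ⟨r, by simpa using hr, ?_, fun hwx hwv =>
    hlt v (by simp) _ (Finset.mem_univ _) (by simp [hwx, hwv])⟩
  rw [heq (by simp : x ∈ _), heq (by simp : v ∈ _)]
  simp [hxv.ne.symm]

namespace IsPerfectRankOn

theorem adj_of_lt (hr : IsPerfectRankOn H Set.univ r) (huw : H.Adj u w) (htw : H.Adj t w)
    (hu : r u < r w) (ht : r t < r w) (hne : u ≠ t) : H.Adj u t :=
  hr.isClique w trivial ⟨trivial, huw, hu⟩ ⟨trivial, htw, ht⟩ hne

theorem lt_or_gt (hr : IsPerfectRankOn H Set.univ r) (huw : H.Adj u w) : r u < r w ∨ r w < r u :=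
  lt_or_gt_of_ne fun h => huw.ne (hr.injOn trivial trivial h)

/-- A vertex with two lower neighbours on a path can be bypassed, since these are adjacent. -/
theorem reflTransGen_lt (hr : IsPerfectRankOn H Set.univ r) {T : Set V}
    (hv : ∀ z ∈ T, r v ≤ r z) (h : ReflTransGen (fun u w => H.Adj u w ∧ w ∈ T) v w) :
    ReflTransGen (fun u w => (H.Adj u w ∧ r u < r w) ∧ w ∈ T) v w := by
  have hdescend {w : V} (hw : ReflTransGen (fun u w => (H.Adj u w ∧ r u < r w) ∧ w ∈ T) v w) :
      ∀ z ∈ T, H.Adj z w → r z < r w →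
        ReflTransGen (fun u w => (H.Adj u w ∧ r u < r w) ∧ w ∈ T) v z := by
    induction hw with
    | refl => exact fun z hzT _ hzv => (hzv.not_ge (hv z hzT)).elim
    | @tail u w hvu huw ih =>
      intro z hzT hzw hlt
      obtain rfl | hne := eq_or_ne u z
      · exact hvu
      have huz := hr.adj_of_lt huw.1.1 hzw huw.1.2 hlt hne
      rcases hr.lt_or_gt huz with huz' | hzu
      · exact hvu.tail ⟨⟨huz, huz'⟩, hzT⟩
      · exact ih z hzT huz.symm hzu
  induction h with
  | refl => exact .refl
  | tail _ huw ih =>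
    rcases hr.lt_or_gt huw.1 with hlt | hgt
    · exact ih.tail ⟨⟨huw.1, hlt⟩, huw.2⟩
    · exact hdescend ih _ huw.2 huw.1.symm hgt

end IsPerfectRankOn

end PerfectRank

section Absorb

variable {M U : V → V → Prop} {a b c : V}

theorem rel_of_rel_of_reflTransGen (hMU : ∀ {a b c}, M a b → U b c → M a c) (hab : M a b)
    (hbc : ReflTransGen U b c) : M a c := by
  induction hbc with
  | refl => exact hab
  | tail _ hstep ih => exact hMU ih hstep

theorem exists_reflTransGen_and_reflTransGen (hMU : ∀ {a b c}, M a b → U b c → M a c)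
    (h : ReflTransGen (fun u w => M u w ∨ U u w) a b) :
    ∃ w, ReflTransGen U a w ∧ ReflTransGen M w b := by
  induction h with
  | refl => exact ⟨a, .refl, .refl⟩
  | tail _ hstep ih =>
    obtain ⟨w, haw, hwb⟩ := ih
    rcases hstep with hM | hU
    · exact ⟨w, haw, hwb.tail hM⟩
    rcases hwb.cases_tail with rfl | ⟨z, hwz, hzb⟩
    · exact ⟨_, haw.tail hU, .refl⟩
    · exact ⟨w, haw, hwz.tail (hMU hzb hU)⟩

end Absorb

/-! ### Meek's rules and the CPDAG -/

namespace Dag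

variable {D D' : Dag V} {r : V → ℕ} {a b c v x y : V}

/-- The edges of `D` whose orientation is forced by the first three orientation rules of Meek,
applied to the immoralities of `D`. The undirected edges of the premises of Meek's rules are
replaced by adjacencies, so that no negative premise about `Meek` itself occurs; `D` orients the
edge in `r1`, and the last premise of `r3` excludes that `p → a ← q` is an immorality. -/
inductive Meek (D : Dag V) : V → V → Prop
  | immorality {a c b : V} : D.Immorality a c b → Meek D a c
  | r1 {p a b : V} : Meek D p a → D.edge a b → ¬ D.Adj p b → p ≠ b → Meek D a b
  | r2 {a d b : V} : Meek D a d → Meek D d b → D.Adj a b → Meek D a b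
  | r3 {a b p q : V} : D.Adj a p → D.Adj a q → Meek D p b → Meek D q b → ¬ D.Adj p q → p ≠ q →
      D.Adj a b → ¬ (D.edge p a ∧ D.edge q a) → Meek D a b

/-- The edges of `D` that remain unoriented under the rules of Meek. -/
def undirected (D : Dag V) : SimpleGraph V where
  Adj a b := D.Adj a b ∧ ¬ D.Meek a b ∧ ¬ D.Meek b a
  symm := ⟨fun _ _ h => ⟨h.1.symm, h.2.2, h.2.1⟩⟩
  loopless := ⟨fun a h => h.1.elim (D.edge_irrefl a) (D.edge_irrefl a)⟩

namespace Meek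

theorem edge_of_samePattern (h : D.SamePattern D') (hab : D.Meek a b) : D'.edge a b := by
  induction hab with
  | immorality himm => exact (h.immorality_iff.1 himm).left
  | r1 _ hab hpb hne ihpa =>
    refine (h.edge_or hab).resolve_right fun hba => edge_asymm hab ?_
    exact (h.immorality_iff.2 ⟨hne, fun hadj => hpb (h.adj_iff.2 hadj), ihpa, hba⟩).right
  | r2 _ _ hab ihad ihdb =>
    exact (h.adj_iff.1 hab).resolve_right fun hba => D'.acyclic _ _ hba (.head ihad (.single ihdb))
  | @r3 a b p q hap haq _ _ hpq hne hab hcoll ihpb ihqb =>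
    refine (h.adj_iff.1 hab).resolve_right fun hba => hcoll ?_
    have hinto {z : V} (haz : D.Adj a z) (hzb : D'.edge z b) : D'.edge z a :=
      (h.adj_iff.1 haz).resolve_left fun haz => D'.acyclic _ _ hba (.head haz (.single hzb))
    have himm := h.immorality_iff.2
      ⟨hne, fun hadj => hpq (h.adj_iff.2 hadj), hinto hap ihpb, hinto haq ihqb⟩
    exact ⟨himm.left, himm.right⟩

theorem edge (h : D.Meek a b) : D.edge a b := h.edge_of_samePattern (.refl D)

theorem adj_of_undirected (hab : D.Meek a b) (hbc : D.undirected.Adj b c) : D.Adj a c := by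
  obtain ⟨hadj, hbc, hcb⟩ := hbc
  have hne : a ≠ c := by
    rintro rfl
    exact hcb hab
  by_contra hac
  rcases hadj with hfwd | hback
  · exact hbc (.r1 hab hfwd hac hne)
  · exact hcb (.immorality ⟨hne.symm, fun hca => hac hca.symm, hback, hab.edge⟩)

theorem trans_undirected (hab : D.Meek a b) (hbc : D.undirected.Adj b c) : D.Meek a c := by
  induction hab with
  | @immorality a b p himm =>
    have hab : D.Meek a b := .immorality himm
    have hpb : D.Meek p b := .immorality himm.symm
    by_cases hcoll : D.edge a c ∧ D.edge p c
    · exact .immorality ⟨himm.ne, himm.not_adj, hcoll.1, hcoll.2⟩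
    · exact (hbc.2.2 (.r3 (hab.adj_of_undirected hbc).symm (hpb.adj_of_undirected hbc).symm
        hab hpb himm.not_adj himm.ne hbc.1.symm hcoll)).elim
  | @r1 p a b hpa hedge hpb hne ih =>
    have hab : D.Meek a b := .r1 hpa hedge hpb hne
    by_contra hac
    have hca : ¬ D.Meek c a := fun hca => hbc.2.2 (.r2 hca hab hbc.1.symm)
    have hpc : D.Meek p c := ih ⟨hab.adj_of_undirected hbc, hac, hca⟩
    rcases hbc.1 with hfwd | hback
    · exact hbc.2.1 (.immorality ⟨hne.symm, fun hbp => hpb hbp.symm, hfwd, hpc.edge⟩)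
    · exact hbc.2.2 (.r1 hpc hback hpb hne)
  | r2 had hdb hadj _ ih =>
    exact .r2 had (ih hbc) ((Meek.r2 had hdb hadj).adj_of_undirected hbc)
  | r3 hap haq hpb hqb hpq hne hadj hcoll ihp ihq =>
    have hab := Meek.r3 hap haq hpb hqb hpq hne hadj hcoll
    exact .r3 hap haq (ihp hbc) (ihq hbc) hpq hne (hab.adj_of_undirected hbc) hcoll

end Meek

/-- The last vertex of `W` in a topological order is simplicial, as two nonadjacent parents would
form an immorality. -/
theorem hasSimplicialVertices_undirected [Finite V] (D : Dag V) :
    HasSimplicialVertices D.undirected := by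
  intro W hW
  obtain ⟨s, hsW, hlast⟩ := D.wellFounded_swap_transGen.has_min (W : Set V) hW
  have hinto {u : V} (hu : u ∈ W) (hsu : D.undirected.Adj s u) : D.edge u s :=
    hsu.1.resolve_left fun h => hlast u hu (.single h)
  refine ⟨s, hsW, ?_⟩
  rintro u ⟨hu, hsu⟩ t ⟨ht, hst⟩ hne
  refine ⟨?_, fun hut => hsu.2.2 (hut.trans_undirected hst.symm), fun htu =>
    hst.2.2 (htu.trans_undirected hsu.symm)⟩
  by_contra hadj
  exact hsu.2.2 (.immorality ⟨hne, hadj, hinto hu hsu, hinto ht hst⟩)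

/-- The edge between `a` and `b` is `a → b` or `a − b` in the graph oriented by the rules of
Meek. -/
def PossEdge (D : Dag V) (a b : V) : Prop := D.Meek a b ∨ D.undirected.Adj a b

theorem Adj.possEdge (h : D.Adj a b) (hba : ¬ D.Meek b a) : D.PossEdge a b :=
  or_iff_not_imp_left.2 fun hab => ⟨h, hab, hba⟩

theorem Meek.not_reflTransGen_possEdge (hab : D.Meek a b) : ¬ ReflTransGen D.PossEdge b a := by
  intro hba
  obtain ⟨w, hbw, hwa⟩ := exists_reflTransGen_and_reflTransGen
    (M := D.Meek) (U := D.undirected.Adj) Meek.trans_undirected hba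
  have haw : D.Meek a w := rel_of_rel_of_reflTransGen Meek.trans_undirected hab hbw
  exact D.acyclic a w haw.edge (ReflTransGen.mono (fun _ _ => Meek.edge) _ _ hwa)

/-- The edges of `D` with those left open by the rules of Meek directed towards the higher
rank. -/
def orient (D : Dag V) (r : V → ℕ) : Dag V where
  edge u w := D.Meek u w ∨ D.undirected.Adj u w ∧ r u < r w
  acyclic a b hab hba := by
    have hposs {u w : V} (h : ReflTransGen
        (fun u w => D.Meek u w ∨ D.undirected.Adj u w ∧ r u < r w) u w) :
        ReflTransGen D.PossEdge u w :=
      ReflTransGen.mono (fun _ _ => Or.imp_right And.left) _ _ h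
    rcases hab with hab | ⟨hab, hlt⟩
    · exact hab.not_reflTransGen_possEdge (hposs hba)
    obtain ⟨w, hbw, hwa⟩ := exists_reflTransGen_and_reflTransGen
      (fun huv hvw => huv.trans_undirected hvw.1) hba
    rcases hwa.cases_tail with rfl | ⟨z, hwz, hza⟩
    · have hle : r b ≤ r a := by
        have := ReflTransGen.lift (p := (· ≤ ·)) r (fun _ _ h => h.2.le) _ _ hbw
        rwa [reflTransGen_eq_self] at this
      exact hlt.not_ge hle
    · refine (hza.trans_undirected hab).not_reflTransGen_possEdge (hposs ?_)
      exact (ReflTransGen.mono (fun _ _ => .inr) _ _ hbw).trans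
        (ReflTransGen.mono (fun _ _ => .inl) _ _ hwz)

theorem adj_of_orient_edge (h : (D.orient r).edge a b) : D.Adj a b :=
  h.elim (fun h => .inl h.edge) fun h => h.1.1

theorem samePattern_orient (hr : IsPerfectRankOn D.undirected Set.univ r) :
    D.SamePattern (D.orient r) := by
  have hadj {a b : V} : D.Adj a b ↔ (D.orient r).Adj a b := by
    refine ⟨fun hab => ?_, fun hab =>
      hab.elim adj_of_orient_edge fun h => (adj_of_orient_edge h).symm⟩
    by_cases hba : D.Meek b a
    · exact .inr (.inl hba)
    rcases hab.possEdge hba with hab | hab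
    · exact .inl (.inl hab)
    · exact (hr.lt_or_gt hab).imp (fun h => .inr ⟨hab, h⟩) fun h => .inr ⟨hab.symm, h⟩
  refine ⟨hadj, fun h => ⟨h.ne, fun hab => h.not_adj (hadj.2 hab), .inl (.immorality h),
    .inl (.immorality h.symm)⟩, fun ⟨hne, hab, hac, hbc⟩ => ?_⟩
  replace hab := fun h => hab (hadj.1 h)
  rcases hac, hbc with ⟨hac | hac, hbc | hbc⟩
  · exact ⟨hne, hab, hac.edge, hbc.edge⟩
  · exact (hab (hac.adj_of_undirected hbc.1.symm)).elim
  · exact (hab (hbc.adj_of_undirected hac.1.symm).symm).elim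
  · exact (hab (hr.adj_of_lt hac.1 hbc.1 hac.2 hbc.2 hne).1).elim

theorem mequiv_orient [Finite V] (hr : IsPerfectRankOn D.undirected Set.univ r) :
    D.MEquiv (D.orient r) :=
  mequiv_iff_samePattern.2 (samePattern_orient hr)

theorem CpDir.edge (h : D.CpDir a b) : D.edge a b := h D fun _ _ _ => Iff.rfl

theorem cpDir_iff_meek [Finite V] : D.CpDir a b ↔ D.Meek a b := by
  refine ⟨fun hdir => ?_, fun hab D' hD' => hab.edge_of_samePattern hD'.samePattern⟩
  refine (Adj.possEdge (.inl hdir.edge) fun hba => edge_asymm hdir.edge hba.edge).resolve_right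
    fun hab => ?_
  obtain ⟨r, hr⟩ := D.hasSimplicialVertices_undirected.exists_isPerfectRankFrom hab.symm
  exact edge_asymm (hdir _ (mequiv_orient hr.perfect)) (.inr ⟨hab.symm, hr.lt⟩)

theorem mem_cpSib_iff [Finite V] : b ∈ D.CpSib a ↔ D.undirected.Adj a b := by
  simp only [CpSib, CpUndir, cpDir_iff_meek, undirected, Set.mem_ofPred_eq]

/-! ### Amenability -/

theorem possEdge_nodes [Finite V] {p : GPath D.Adj x y} (hp : p.CpPossiblyDirected) {i : ℕ}
    (hi : i < p.n) : D.PossEdge (p.nodes i) (p.nodes (i + 1)) := by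
  rw [p.nodes_of_le hi.le, p.nodes_of_le hi]
  exact Adj.possEdge (p.adj ⟨i, hi⟩) fun h => hp ⟨i, hi⟩ (cpDir_iff_meek.2 h)

theorem PossAn.reflTransGen_possEdge [Finite V] (h : D.PossAn x y) :
    ReflTransGen D.PossEdge x y := by
  obtain ⟨p, hp⟩ := h
  simpa only [p.nodes_zero] using
    p.reflTransGen_nodes (Nat.zero_le _) fun i _ hi => possEdge_nodes hp hi

/-- Every directed path starting with `x → v` is possibly directed in the CPDAG. -/
theorem Amenable.cpDir_of_anc (h : D.Amenable x y) (hD' : D.MEquiv D') (hxv : D'.edge x v)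
    (hvy : D'.Anc v y) : D.CpDir x v := by
  obtain ⟨l, hl, hlast⟩ := List.exists_isChain_cons_of_relationReflTransGen hvy
  have hchain : List.IsChain D'.edge (x :: v :: l) := hl.cons_cons hxv
  have hedge (i : ℕ) (hi : i < l.length + 1) :
      D'.edge ((x :: v :: l)[i]'(by grind)) ((x :: v :: l)[i + 1]'(by grind)) :=
    hchain.getElem i (by grind)
  have hnodup : (x :: v :: l).Nodup := by
    have htrans : List.IsChain (TransGen D'.edge) (x :: v :: l) := hchain.imp fun _ _ => .single
    refine htrans.pairwise.imp ?_
    rintro u _ hu rfl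
    exact D'.not_transGen_self u hu
  let p : GPath D.Adj x y :=
    { n := l.length + 1
      f := (x :: v :: l).get
      inj := hnodup.injective_get
      first := rfl
      last := by simpa [List.getLast_eq_getElem] using hlast
      adj := fun i => hD'.symm.adj (.inl (hedge i i.2)) }
  exact h p (fun i hi => edge_asymm (hedge i i.2) (hi D' hD')) (Nat.succ_pos _)

theorem cpPa_union_eq [Finite V] (hr : IsPerfectRankFrom D.undirected x v r)
    (hxv : D.undirected.Adj x v) : D.CpPa v ∪ {x} = (D.orient r).Pa v := by
  ext u
  simp only [CpPa, Pa, cpDir_iff_meek, Set.mem_union, Set.mem_ofPred_eq, Set.mem_singleton_iff]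
  refine or_congr_right ⟨?_, fun ⟨huv, hlt⟩ => ?_⟩
  · rintro rfl
    exact ⟨hxv, hr.lt⟩
  · by_contra hux
    exact hlt.asymm (hr.lt_of_ne hux huv.ne)

theorem Amenable.dSep [Finite V] (ham : D.Amenable x y) (hne : x ≠ y) (hposs : D.PossAn x y)
    (hv : v ∈ D.CpSib x) (hD' : D.MEquiv D') : D'.dSep v y (D.CpPa v ∪ {x}) := by
  have hxv := mem_cpSib_iff.1 hv
  obtain ⟨r, hr⟩ := D.hasSimplicialVertices_undirected.exists_isPerfectRankFrom hxv
  have horient := mequiv_orient hr.perfect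
  rw [← hD', horient, cpPa_union_eq hr hxv]
  refine dSep_parents (fun hvy => hv.2.1 ?_) ?_
  · exact ham.cpDir_of_anc horient (.inr ⟨hxv, hr.lt⟩) hvy
  · rintro (hyv | ⟨hyv, hlt⟩)
    · exact hyv.not_reflTransGen_possEdge (hposs.reflTransGen_possEdge.head (.inr hxv.symm))
    · exact hlt.asymm (hr.lt_of_ne hne.symm hyv.ne)

/-- Orient the undirected edges from `v` first and `x` second: a path from `v` that is possibly
directed and avoids `x` then yields a directed one. -/
theorem exists_mequiv_reflTransGen_ne [Finite V] (hxv : D.undirected.Adj x v)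
    (h : ReflTransGen (fun u w => D.PossEdge u w ∧ w ≠ x) v y) :
    ∃ E, D.MEquiv E ∧ ReflTransGen (fun u w => E.edge u w ∧ w ≠ x) v y := by
  obtain ⟨r, hr⟩ := D.hasSimplicialVertices_undirected.exists_isPerfectRankFrom hxv.symm
  obtain ⟨w, hvw, hwy⟩ := exists_reflTransGen_and_reflTransGen
    (M := fun u w => D.Meek u w ∧ w ≠ x) (U := fun u w => D.undirected.Adj u w ∧ w ≠ x)
    (fun hab hbc => ⟨hab.1.trans_undirected hbc.1, hbc.2⟩)
    (ReflTransGen.mono (fun _ _ h => or_and_right.1 h) _ _ h)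
  have hmin : ∀ z ∈ ({x}ᶜ : Set V), r v ≤ r z := by
    intro z hz
    obtain rfl | hzv := eq_or_ne z v
    · exact le_rfl
    · exact (hr.lt.trans (hr.lt_of_ne hzv hz)).le
  refine ⟨D.orient r, mequiv_orient hr.perfect, .trans (b := w) ?_ ?_⟩
  · exact ReflTransGen.mono (fun _ _ h => ⟨.inr h.1, h.2⟩) _ _
      (hr.perfect.reflTransGen_lt hmin hvw)
  · exact ReflTransGen.mono (fun _ _ h => ⟨.inl h.1, h.2⟩) _ _ hwy

theorem MEquiv.not_dSep_of_reflTransGen_ne (hD' : D.MEquiv D')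
    (h : ReflTransGen (fun u w => D'.edge u w ∧ w ≠ x) v y) :
    ¬ D'.dSep v y (D.CpPa v ∪ {x}) := by
  suffices D'.Anc v y ∧ ReflTransGen (fun u w => D'.edge u w ∧ w ∉ D.CpPa v ∪ {x}) v y from
    not_dSep_of_directed this.2
  induction h with
  | refl => exact ⟨.refl, .refl⟩
  | @tail u w _ huw ih =>
    have hvw : D'.Anc v w := ih.1.tail huw.1
    refine ⟨hvw, ih.2.tail ⟨huw.1, ?_⟩⟩
    rintro (hwv | hwx)
    · exact D'.acyclic _ _ (hwv D' hD') hvw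
    · exact huw.2 hwx

theorem amenable_of_dSep [Finite V]
    (h : ∀ v ∈ D.CpSib x, ∀ D', D.MEquiv D' → D'.dSep v y (D.CpPa v ∪ {x})) :
    D.Amenable x y := by
  intro p hp hpos
  by_contra hdir
  rw [cpDir_iff_meek, ← p.nodes_of_le hpos.le, ← p.nodes_of_le hpos, p.nodes_zero] at hdir
  have hxv : D.undirected.Adj x (p.nodes 1) := by
    simpa only [p.nodes_zero] using (possEdge_nodes hp hpos).resolve_left
      (by simpa only [p.nodes_zero] using hdir)
  have htail : ReflTransGen (fun u w => D.PossEdge u w ∧ w ≠ x) (p.nodes 1) y :=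
    p.reflTransGen_nodes hpos fun i _ hi => ⟨possEdge_nodes hp hi, p.nodes_succ_ne hi⟩
  obtain ⟨E, hE, hvy⟩ := exists_mequiv_reflTransGen_ne hxv htail
  exact hE.not_dSep_of_reflTransGen_ne hvy (h _ (mem_cpSib_iff.2 hxv) E hE)

end Dag

/-- For distinct `X`, `Y` with `X` a possible ancestor of `Y` in the CPDAG
`G` of the MEC of a DAG, `G` is amenable relative to `(X, Y)` iff for every sibling `v` of
`X`, the set `Pa_G(v) ∪ {X}` d-separates `v` and `Y` in every DAG of the MEC. -/
theorem amenable_iff_siblings_dSep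
    {V : Type*} [Fintype V] (D : Dag V) (X Y : V) (hXY : X ≠ Y)
    (hposs : D.PossAn X Y) :
    D.Amenable X Y ↔
      ∀ v ∈ D.CpSib X, ∀ D' : Dag V, D.MEquiv D' →
        D'.dSep v Y (D.CpPa v ∪ {X}) := by
  constructor
  · exact fun ham v hv D' hD' => ham.dSep hXY hposs hv hD'
  · exact Dag.amenable_of_dSep
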